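/- Let p be a prime and let φ be an m × n matrix over Z/p² whose entries are chosen independently and uniformly at random from {0, 1, ..., p²−1}. Let ψ = φ̄ be the reduction of φ modulo p, let k = dim(ker ψ), and let β_φ : ker ψ → coker ψ be the Bockstein homomorphism defined by φ. Then for any fixed Z/p-linear map β : ker ψ → coker ψ, the conditional probability P(β_φ = β | φ̄ = ψ) equals 1/p^(k(m−n+k)). Equivalently: for any fixed Z/p-linear map ψ : (Z/p)ⁿ → (Z/p)ᵐ with k = dim(ker ψ) and any β ∈ Hom(ker ψ, coker ψ), the number of Z/p²-linear maps φ : (Z/p²)ⁿ → (Z/p²)ᵐ with φ̄ = ψ and β_φ = β, divided by the number of Z/p²-linear maps φ with φ̄ = ψ, equals 1/p^(k(m−n+k)). -/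

import Mathlib

/-- The submodule `pV` of a `ℤ/p²`-module `V`, i.e. the image of multiplication by `p`. -/
def pSub (p : ℕ) (V : Type*) [AddCommGroup V] [Module (ZMod (p ^ 2)) V] :
    Submodule (ZMod (p ^ 2)) V :=
  LinearMap.range ((p : ZMod (p ^ 2)) • (LinearMap.id : V →ₗ[ZMod (p ^ 2)] V))

lemma smul_mem_pSub (p : ℕ) (V : Type*) [AddCommGroup V] [Module (ZMod (p ^ 2)) V] (x : V) :
    (p : ZMod (p ^ 2)) • x ∈ pSub p V :=
  ⟨x, rfl⟩

/-- `V/pV` is a `ℤ/p`-vector space. -/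
noncomputable instance quotModZMod (p : ℕ) [NeZero p] (V : Type*) [AddCommGroup V]
    [Module (ZMod (p ^ 2)) V] : Module (ZMod p) (V ⧸ pSub p V) :=
  AddCommGroup.zmodModule (by
    intro x
    obtain ⟨v, rfl⟩ := Submodule.Quotient.mk_surjective _ x
    rw [← Nat.cast_smul_eq_nsmul (ZMod (p ^ 2)), ← Submodule.Quotient.mk_smul,
      Submodule.Quotient.mk_eq_zero]
    exact smul_mem_pSub p V v)

/-- The map `V/pV → W/pW` induced by a `ℤ/p²`-linear map `φ : V → W`, as a
`ℤ/p`-linear map. -/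
noncomputable def inducedMap (p : ℕ) [NeZero p] {V W : Type*} [AddCommGroup V]
    [Module (ZMod (p ^ 2)) V] [AddCommGroup W] [Module (ZMod (p ^ 2)) W]
    (φ : V →ₗ[ZMod (p ^ 2)] W) :
    (V ⧸ pSub p V) →ₗ[ZMod p] (W ⧸ pSub p W) :=
  ((Submodule.mapQ (pSub p V) (pSub p W) φ (by
      rintro x ⟨v, rfl⟩
      exact ⟨φ v, by simp⟩)).toAddMonoidHom).toZModLinearMap p

@[simp] lemma inducedMap_mk (p : ℕ) [NeZero p] {V W : Type*} [AddCommGroup V]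
    [Module (ZMod (p ^ 2)) V] [AddCommGroup W] [Module (ZMod (p ^ 2)) W]
    (φ : V →ₗ[ZMod (p ^ 2)] W) (v : V) :
    inducedMap p φ (Submodule.Quotient.mk v) = Submodule.Quotient.mk (φ v) := rfl

/-- `β : ker ψ → coker ψ` is *the* Bockstein homomorphism of a map `φ : V → W`
inducing `ψ` when, for every `v ∈ V` reducing into `ker ψ` and every `w` with
`φ v = p • w`, one has `β v̄ = (w + pW) + ψ(V/pV)`. -/
def IsBockstein (p : ℕ) [NeZero p] {V W : Type*} [AddCommGroup V]
    [Module (ZMod (p ^ 2)) V] [AddCommGroup W] [Module (ZMod (p ^ 2)) W]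
    (ψ : (V ⧸ pSub p V) →ₗ[ZMod p] (W ⧸ pSub p W)) (φ : V →ₗ[ZMod (p ^ 2)] W)
    (β : ↥(LinearMap.ker ψ) →ₗ[ZMod p] ((W ⧸ pSub p W) ⧸ LinearMap.range ψ)) : Prop :=
  ∀ (v : V) (hv : Submodule.Quotient.mk v ∈ LinearMap.ker ψ) (w : W),
    φ v = (p : ZMod (p ^ 2)) • w →
    β ⟨Submodule.Quotient.mk v, hv⟩ = Submodule.Quotient.mk (Submodule.Quotient.mk w)

/-!
Multiplication by `p` identifies `W/pW` with `pW`, because `W` is flat over `ℤ/p²`. Since `V` is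
projective, the lifts of `ψ` therefore form a torsor under `Hom(V/pV, W/pW)`, with `α` acting by
`φ ↦ φ + pα`. This action adds to the Bockstein of `φ` the map `ker ψ → coker ψ` induced by `α`.
Over the field `ℤ/p` every map `ker ψ → coker ψ` arises in this way, so the Bockstein is a translate
of a surjective homomorphism of finite groups, and such a map is equidistributed.
-/

lemma natCard_fiber_mul_natCard {A B : Type*} [AddGroup A] [AddGroup B] {f : A →+ B}
    (hf : Function.Surjective f) (b : B) :
    Nat.card {a // f a = b} * Nat.card B = Nat.card A := by
  have hfiber : Nat.card {a // f a = b} = Nat.card f.ker :=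
    Nat.card_congr (AddMonoidHom.fiberEquivKerOfSurjective hf b)
  have hindex : f.ker.index = Nat.card B := by
    rw [AddSubgroup.index_ker, AddMonoidHom.range_eq_top.2 hf, AddSubgroup.card_top]
  rw [hfiber, ← hindex, AddSubgroup.card_mul_index]

lemma finrank_quotient_range_eq_sub {K M N : Type*} [DivisionRing K] [AddCommGroup M]
    [Module K M] [FiniteDimensional K M] [AddCommGroup N] [Module K N] [FiniteDimensional K N]
    (f : M →ₗ[K] N) :
    Module.finrank K (N ⧸ LinearMap.range f) =
      Module.finrank K N - (Module.finrank K M - Module.finrank K (LinearMap.ker f)) := by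
  have hdomain := LinearMap.finrank_range_add_finrank_ker f
  have hcodomain := (LinearMap.range f).finrank_quotient_add_finrank
  lia

section KerToCoker

variable {R M N : Type*} [CommRing R] [AddCommGroup M] [Module R M] [AddCommGroup N] [Module R N]

/-- The map `Hom(M, N) → Hom(ker f, coker f)` that restricts a linear map to `ker f` and composes
it with the projection onto `coker f`; for `f = ψ` it records how the Bockstein varies. -/
def kerToCoker (f : M →ₗ[R] N) :
    (M →ₗ[R] N) →ₗ[R] (LinearMap.ker f →ₗ[R] (N ⧸ LinearMap.range f)) :=
  LinearMap.compRight R (LinearMap.range f).mkQ ∘ₗ LinearMap.lcomp R N (LinearMap.ker f).subtype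

lemma kerToCoker_apply (f α : M →ₗ[R] N) (x : LinearMap.ker f) :
    kerToCoker f α x = Submodule.Quotient.mk (α x) := rfl

lemma kerToCoker_surjective {K : Type*} [Field K] [Module K M] [Module K N] (f : M →ₗ[K] N) :
    Function.Surjective (kerToCoker f) := by
  intro γ
  obtain ⟨g, rfl⟩ := Module.projective_lifting_property (LinearMap.range f).mkQ γ
    (Submodule.mkQ_surjective _)
  obtain ⟨α, rfl⟩ := LinearMap.exists_extend g
  exact ⟨α, rfl⟩

end KerToCoker

section MulPQuot

variable {p : ℕ} {V W : Type*} [AddCommGroup V] [Module (ZMod (p ^ 2)) V]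
  [AddCommGroup W] [Module (ZMod (p ^ 2)) W]

lemma natCast_dvd_of_natCast_mul_eq_zero [NeZero p] {a : ZMod (p ^ 2)}
    (ha : (p : ZMod (p ^ 2)) * a = 0) : (p : ZMod (p ^ 2)) ∣ a := by
  obtain ⟨b, rfl⟩ := ZMod.natCast_zmod_surjective a
  rw [← Nat.cast_mul, ZMod.natCast_eq_zero_iff] at ha
  exact Nat.cast_dvd_cast (Nat.dvd_of_mul_dvd_mul_left (NeZero.pos p) ((sq p).symm.dvd.trans ha))

lemma mem_pSub_of_smul_eq_zero [NeZero p] [Module.Flat (ZMod (p ^ 2)) W] {w : W}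
    (hw : (p : ZMod (p ^ 2)) • w = 0) : w ∈ pSub p W := by
  obtain ⟨k, a, y, hwy, ha⟩ := Module.Flat.isTrivialRelation_of_sum_smul_eq_zero
    (f := fun _ : Unit ↦ (p : ZMod (p ^ 2))) (x := fun _ ↦ w) (by simpa using hw)
  rw [show w = ∑ j, a () j • y j from hwy ()]
  refine Submodule.sum_mem _ fun j _ ↦ ?_
  obtain ⟨b, hb⟩ := natCast_dvd_of_natCast_mul_eq_zero (by simpa using ha j)
  rw [hb, mul_smul]
  exact smul_mem_pSub p W _

variable (p W) in
/-- The map `W/pW → W` induced by multiplication by `p` on `W`. For `W` flat it identifies `W/pW`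
with `pW`, and so makes sense of dividing an element of `pW` by `p` modulo `pW`. -/
def mulPQuot : (W ⧸ pSub p W) →ₗ[ZMod (p ^ 2)] W :=
  (pSub p W).liftQ ((p : ZMod (p ^ 2)) • LinearMap.id) (by
    rintro _ ⟨w, rfl⟩
    have hp : (p : ZMod (p ^ 2)) * p = 0 := by rw [← Nat.cast_mul, ← sq, ZMod.natCast_self]
    simp [smul_smul, hp])

lemma mulPQuot_mk (w : W) :
    mulPQuot p W (Submodule.Quotient.mk w) = (p : ZMod (p ^ 2)) • w := rfl

lemma range_mulPQuot : LinearMap.range (mulPQuot p W) = pSub p W :=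
  Submodule.range_liftQ _ _ _

lemma mk_eq_zero_iff_exists_mulPQuot_eq {w : W} :
    (Submodule.Quotient.mk w : W ⧸ pSub p W) = 0 ↔ ∃ z, mulPQuot p W z = w :=
  (Submodule.Quotient.mk_eq_zero _).trans (SetLike.ext_iff.1 range_mulPQuot w).symm

lemma mulPQuot_injective [NeZero p] [Module.Flat (ZMod (p ^ 2)) W] :
    Function.Injective (mulPQuot p W) := by
  rw [injective_iff_map_eq_zero, (Submodule.Quotient.mk_surjective _).forall]
  intro w hw
  rw [mulPQuot_mk] at hw
  exact (Submodule.Quotient.mk_eq_zero _).2 (mem_pSub_of_smul_eq_zero hw)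

lemma map_mulPQuot [NeZero p] (φ : V →ₗ[ZMod (p ^ 2)] W) (x : V ⧸ pSub p V) :
    φ (mulPQuot p V x) = mulPQuot p W (inducedMap p φ x) := by
  obtain ⟨v, rfl⟩ := Submodule.Quotient.mk_surjective _ x
  rw [mulPQuot_mk, inducedMap_mk, mulPQuot_mk, map_smul]

instance moduleFiniteQuotientPSub [NeZero p] [Module.Finite (ZMod (p ^ 2)) V] :
    Module.Finite (ZMod p) (V ⧸ pSub p V) :=
  have : Finite (V ⧸ pSub p V) := Module.finite_of_finite (ZMod (p ^ 2))
  Module.Finite.of_finite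

instance nontrivialZModSq [Fact p.Prime] : Nontrivial (ZMod (p ^ 2)) :=
  ZMod.nontrivial_iff.2 ((Nat.one_lt_pow two_ne_zero (Fact.out : p.Prime).one_lt).ne')

lemma finrank_quotient_pSub [Fact p.Prime] [Module.Free (ZMod (p ^ 2)) V]
    [Module.Finite (ZMod (p ^ 2)) V] :
    Module.finrank (ZMod p) (V ⧸ pSub p V) = Module.finrank (ZMod (p ^ 2)) V := by
  have hpV : Nat.card (pSub p V) = Nat.card (V ⧸ pSub p V) := by
    rw [Nat.card_congr (LinearEquiv.ofInjective (mulPQuot p V) mulPQuot_injective).toEquiv,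
      range_mulPQuot]
  have hV : Nat.card V = p ^ (2 * Module.finrank (ZMod (p ^ 2)) V) := by
    rw [Nat.card_congr (Module.finBasis (ZMod (p ^ 2)) V).equivFun.toEquiv, Nat.card_fun,
      Nat.card_zmod, Nat.card_fin, pow_mul]
  have hcard := (pSub p V).card_eq_card_quotient_mul_card
  rw [hpV, hV, Module.natCard_eq_pow_finrank (K := ZMod p), Nat.card_zmod, ← pow_add,
    ← two_mul] at hcard
  have hexp := Nat.pow_right_injective (Fact.out : p.Prime).two_le hcard
  exact (Nat.eq_of_mul_eq_mul_left two_pos hexp).symm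

end MulPQuot

section Lifts

variable {p : ℕ} [NeZero p] {V W : Type*} [AddCommGroup V] [Module (ZMod (p ^ 2)) V]
  [AddCommGroup W] [Module (ZMod (p ^ 2)) W]

/-- The map `Hom(V/pV, W/pW) → Hom(V, W)` written `α ↦ pα`: it precomposes `α` with the reduction
`V → V/pV` and postcomposes it with multiplication by `p`, as a map `W/pW → W`. -/
noncomputable def mulPHom (α : (V ⧸ pSub p V) →ₗ[ZMod p] (W ⧸ pSub p W)) : V →ₗ[ZMod (p ^ 2)] W :=
  mulPQuot p W ∘ₗ α.toAddMonoidHom.toZModLinearMap (p ^ 2) ∘ₗ (pSub p V).mkQ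

lemma mulPHom_apply (α : (V ⧸ pSub p V) →ₗ[ZMod p] (W ⧸ pSub p W)) (v : V) :
    mulPHom α v = mulPQuot p W (α (Submodule.Quotient.mk v)) := rfl

lemma mulPHom_injective [Module.Flat (ZMod (p ^ 2)) W] :
    Function.Injective (mulPHom (p := p) (V := V) (W := W)) := by
  intro α α' h
  refine LinearMap.ext <| (Submodule.Quotient.mk_surjective _).forall.2 fun v ↦ ?_
  exact mulPQuot_injective (LinearMap.congr_fun h v)

lemma mulPHom_inducedMap (φ : V →ₗ[ZMod (p ^ 2)] W) :
    mulPHom (inducedMap p φ) = (p : ZMod (p ^ 2)) • φ := rfl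

lemma inducedMap_add_mulPHom (φ : V →ₗ[ZMod (p ^ 2)] W)
    (α : (V ⧸ pSub p V) →ₗ[ZMod p] (W ⧸ pSub p W)) :
    inducedMap p (φ + mulPHom α) = inducedMap p φ := by
  refine LinearMap.ext <| (Submodule.Quotient.mk_surjective _).forall.2 fun v ↦ ?_
  have hα : (Submodule.Quotient.mk (mulPHom α v) : W ⧸ pSub p W) = 0 :=
    mk_eq_zero_iff_exists_mulPQuot_eq.2 ⟨_, rfl⟩
  rw [inducedMap_mk, inducedMap_mk, LinearMap.add_apply, Submodule.Quotient.mk_add, hα, add_zero]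

lemma inducedMap_surjective [Module.Projective (ZMod (p ^ 2)) V] :
    Function.Surjective (inducedMap p (V := V) (W := W)) := by
  intro ψ
  obtain ⟨φ, hφ⟩ := Module.projective_lifting_property (pSub p W).mkQ
    (ψ.toAddMonoidHom.toZModLinearMap (p ^ 2) ∘ₗ (pSub p V).mkQ) (Submodule.mkQ_surjective _)
  exact ⟨φ, LinearMap.ext <|
    (Submodule.Quotient.mk_surjective _).forall.2 fun v ↦ LinearMap.congr_fun hφ v⟩

lemma exists_add_mulPHom_eq [Module.Projective (ZMod (p ^ 2)) V] {φ φ' : V →ₗ[ZMod (p ^ 2)] W}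
    (h : inducedMap p φ' = inducedMap p φ) : ∃ α, φ + mulPHom α = φ' := by
  have hdiff (v : V) : (φ' - φ) v ∈ pSub p W :=
    (Submodule.Quotient.eq _).1 (LinearMap.congr_fun h (Submodule.Quotient.mk v))
  obtain ⟨δ, hδ⟩ := Module.projective_lifting_property
    ((p : ZMod (p ^ 2)) • (LinearMap.id : W →ₗ[ZMod (p ^ 2)] W)).rangeRestrict
    ((φ' - φ).codRestrict (pSub p W) hdiff) (LinearMap.surjective_rangeRestrict _)
  have hpδ : (p : ZMod (p ^ 2)) • δ = φ' - φ :=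
    LinearMap.ext fun v ↦ congrArg Subtype.val (LinearMap.congr_fun hδ v)
  exact ⟨inducedMap p δ, by rw [mulPHom_inducedMap, hpδ, add_sub_cancel]⟩

/-- The simply transitive action of `Hom(V/pV, W/pW)` on the lifts of `ψ`, with a lift `φ` taken
as base point: `α` corresponds to `φ + pα`. -/
noncomputable def liftEquiv [Module.Projective (ZMod (p ^ 2)) V] [Module.Flat (ZMod (p ^ 2)) W]
    {ψ : (V ⧸ pSub p V) →ₗ[ZMod p] (W ⧸ pSub p W)} {φ : V →ₗ[ZMod (p ^ 2)] W}
    (hφ : inducedMap p φ = ψ) :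
    ((V ⧸ pSub p V) →ₗ[ZMod p] (W ⧸ pSub p W)) ≃
      {φ' : V →ₗ[ZMod (p ^ 2)] W // inducedMap p φ' = ψ} :=
  Equiv.ofBijective (fun α ↦ ⟨φ + mulPHom α, (inducedMap_add_mulPHom φ α).trans hφ⟩)
    ⟨fun _ _ h ↦ mulPHom_injective (add_left_cancel (congrArg Subtype.val h)),
      fun ⟨_, hφ'⟩ ↦ (exists_add_mulPHom_eq (hφ'.trans hφ.symm)).imp fun _ ↦ Subtype.ext⟩

end Lifts

section Bockstein

variable {p : ℕ} [NeZero p] {V W : Type*} [AddCommGroup V] [Module (ZMod (p ^ 2)) V]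
  [AddCommGroup W] [Module (ZMod (p ^ 2)) W]
  {ψ : (V ⧸ pSub p V) →ₗ[ZMod p] (W ⧸ pSub p W)} {φ : V →ₗ[ZMod (p ^ 2)] W}
  {β β' : LinearMap.ker ψ →ₗ[ZMod p] ((W ⧸ pSub p W) ⧸ LinearMap.range ψ)}

lemma isBockstein_iff_forall_mulPQuot :
    IsBockstein p ψ φ β ↔ ∀ (v : V) (hv : Submodule.Quotient.mk v ∈ LinearMap.ker ψ)
      (z : W ⧸ pSub p W), φ v = mulPQuot p W z →
        β ⟨Submodule.Quotient.mk v, hv⟩ = Submodule.Quotient.mk z :=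
  forall₂_congr fun v hv ↦ ((Submodule.Quotient.mk_surjective _).forall (p := fun z ↦
    φ v = mulPQuot p W z → β ⟨Submodule.Quotient.mk v, hv⟩ = Submodule.Quotient.mk z)).symm

lemma exists_eq_mulPQuot_of_mk_mem_ker (hφ : inducedMap p φ = ψ) {v : V}
    (hv : Submodule.Quotient.mk v ∈ LinearMap.ker ψ) : ∃ z, φ v = mulPQuot p W z := by
  rw [LinearMap.mem_ker, ← hφ, inducedMap_mk, mk_eq_zero_iff_exists_mulPQuot_eq] at hv
  exact hv.imp fun _ ↦ Eq.symm

lemma sub_mem_range_of_eq_mulPQuot [Module.Flat (ZMod (p ^ 2)) W] {v v' : V} {z z' : W ⧸ pSub p W}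
    (hv : (Submodule.Quotient.mk v : V ⧸ pSub p V) = Submodule.Quotient.mk v')
    (hz : φ v = mulPQuot p W z) (hz' : φ v' = mulPQuot p W z') :
    z - z' ∈ LinearMap.range (inducedMap p φ) := by
  obtain ⟨x, hx⟩ : ∃ x, mulPQuot p V x = v - v' := by
    rw [← mk_eq_zero_iff_exists_mulPQuot_eq, Submodule.Quotient.mk_sub, hv, sub_self]
  refine ⟨x, mulPQuot_injective ?_⟩
  rw [← map_mulPQuot, hx, map_sub, map_sub, hz, hz']

lemma exists_isBockstein [Module.Flat (ZMod (p ^ 2)) W] (hφ : inducedMap p φ = ψ) :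
    ∃ β, IsBockstein p ψ φ β := by
  subst hφ
  choose v hv using fun x : LinearMap.ker (inducedMap p φ) ↦
    Submodule.Quotient.mk_surjective _ (x : V ⧸ pSub p V)
  choose z hz using fun x : LinearMap.ker (inducedMap p φ) ↦
    exists_eq_mulPQuot_of_mk_mem_ker (v := v x) rfl ((hv x).symm ▸ x.2)
  have hadd (x y : LinearMap.ker (inducedMap p φ)) :
      (Submodule.Quotient.mk (z (x + y)) : _ ⧸ LinearMap.range (inducedMap p φ)) =
        Submodule.Quotient.mk (z x) + Submodule.Quotient.mk (z y) := by
    rw [← Submodule.Quotient.mk_add, Submodule.Quotient.eq]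
    refine sub_mem_range_of_eq_mulPQuot (v' := v x + v y) ?_ (hz _) ?_
    · rw [Submodule.Quotient.mk_add, hv, hv, hv, Submodule.coe_add]
    · rw [map_add, map_add, hz, hz]
  refine ⟨(AddMonoidHom.mk' (fun x ↦ Submodule.Quotient.mk (z x)) hadd).toZModLinearMap p, ?_⟩
  exact isBockstein_iff_forall_mulPQuot.2 fun v' hv' z' hz' ↦ (Submodule.Quotient.eq _).2
    (sub_mem_range_of_eq_mulPQuot (hv ⟨_, hv'⟩) (hz _) hz')

lemma IsBockstein.unique (hφ : inducedMap p φ = ψ) (hβ : IsBockstein p ψ φ β)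
    (hβ' : IsBockstein p ψ φ β') : β = β' := by
  rw [isBockstein_iff_forall_mulPQuot] at hβ hβ'
  refine LinearMap.ext fun ⟨x, hx⟩ ↦ ?_
  obtain ⟨v, rfl⟩ := Submodule.Quotient.mk_surjective _ x
  obtain ⟨z, hz⟩ := exists_eq_mulPQuot_of_mk_mem_ker hφ hx
  rw [hβ v hx z hz, hβ' v hx z hz]

lemma IsBockstein.add_mulPHom (hβ : IsBockstein p ψ φ β)
    (α : (V ⧸ pSub p V) →ₗ[ZMod p] (W ⧸ pSub p W)) :
    IsBockstein p ψ (φ + mulPHom α) (β + kerToCoker ψ α) := by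
  rw [isBockstein_iff_forall_mulPQuot] at hβ ⊢
  intro v hv z hz
  have hφv : φ v = mulPQuot p W (z - α (Submodule.Quotient.mk v)) := by
    rw [map_sub, ← hz, LinearMap.add_apply, mulPHom_apply, add_sub_cancel_right]
  rw [LinearMap.add_apply, hβ v hv _ hφv, kerToCoker_apply, ← Submodule.Quotient.mk_add,
    sub_add_cancel]

lemma isBockstein_add_mulPHom_iff (hφ : inducedMap p φ = ψ) (hβ : IsBockstein p ψ φ β)
    (α : (V ⧸ pSub p V) →ₗ[ZMod p] (W ⧸ pSub p W)) :
    IsBockstein p ψ (φ + mulPHom α) β' ↔ kerToCoker ψ α = β' - β := by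
  rw [eq_sub_iff_add_eq']
  constructor
  · exact (hβ.add_mulPHom α).unique ((inducedMap_add_mulPHom φ α).trans hφ)
  · rintro rfl
    exact hβ.add_mulPHom α

end Bockstein

section Count

variable {p : ℕ} [Fact p.Prime] {V W : Type*} [AddCommGroup V] [Module (ZMod (p ^ 2)) V]
  [Module.Projective (ZMod (p ^ 2)) V] [AddCommGroup W] [Module (ZMod (p ^ 2)) W]
  [Module.Flat (ZMod (p ^ 2)) W] (ψ : (V ⧸ pSub p V) →ₗ[ZMod p] (W ⧸ pSub p W))
  (β : LinearMap.ker ψ →ₗ[ZMod p] ((W ⧸ pSub p W) ⧸ LinearMap.range ψ))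

lemma natCard_isBockstein_mul_natCard :
    Nat.card {φ : V →ₗ[ZMod (p ^ 2)] W // inducedMap p φ = ψ ∧ IsBockstein p ψ φ β} *
        Nat.card (LinearMap.ker ψ →ₗ[ZMod p] ((W ⧸ pSub p W) ⧸ LinearMap.range ψ)) =
      Nat.card {φ : V →ₗ[ZMod (p ^ 2)] W // inducedMap p φ = ψ} := by
  obtain ⟨φ₀, hφ₀⟩ := inducedMap_surjective ψ
  obtain ⟨β₀, hβ₀⟩ := exists_isBockstein hφ₀
  have hfiber : {α // kerToCoker ψ α = β - β₀} ≃
      {φ : V →ₗ[ZMod (p ^ 2)] W // inducedMap p φ = ψ ∧ IsBockstein p ψ φ β} :=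
    ((liftEquiv hφ₀).subtypeEquiv fun α ↦ (isBockstein_add_mulPHom_iff hφ₀ hβ₀ α).symm).trans
      (Equiv.subtypeSubtypeEquivSubtypeInter _ (IsBockstein p ψ · β))
  rw [← Nat.card_congr hfiber, ← Nat.card_congr (liftEquiv hφ₀)]
  exact natCard_fiber_mul_natCard (f := (kerToCoker ψ).toAddMonoidHom) (kerToCoker_surjective ψ) _

theorem bockstein_uniform_general [Module.Finite (ZMod (p ^ 2)) V]
    [Module.Finite (ZMod (p ^ 2)) W] :
    (Nat.card {φ : V →ₗ[ZMod (p ^ 2)] W // inducedMap p φ = ψ ∧ IsBockstein p ψ φ β} : ℚ) /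
        (Nat.card {φ : V →ₗ[ZMod (p ^ 2)] W // inducedMap p φ = ψ} : ℚ) =
      1 / (p : ℚ) ^ (Module.finrank (ZMod p) (LinearMap.ker ψ) *
        Module.finrank (ZMod p) ((W ⧸ pSub p W) ⧸ LinearMap.range ψ)) := by
  have : Finite V := Module.finite_of_finite (ZMod (p ^ 2))
  have : Finite W := Module.finite_of_finite (ZMod (p ^ 2))
  have : Finite (V →ₗ[ZMod (p ^ 2)] W) := DFunLike.finite _
  have hcount := natCard_isBockstein_mul_natCard ψ β
  have hlifts : Nat.card {φ : V →ₗ[ZMod (p ^ 2)] W // inducedMap p φ = ψ} ≠ 0 :=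
    Nat.card_ne_zero.2 ⟨nonempty_subtype.2 (inducedMap_surjective ψ), inferInstance⟩
  rw [← hcount] at hlifts ⊢
  have hfiber := Nat.cast_ne_zero (R := ℚ).2 (left_ne_zero_of_mul hlifts)
  rw [Module.natCard_eq_pow_finrank (K := ZMod p) (V := LinearMap.ker ψ →ₗ[ZMod p] _),
    Nat.card_zmod, Module.finrank_linearMap, Nat.cast_mul, Nat.cast_pow,
    div_mul_cancel_left₀ hfiber, one_div]

end Count

/-- Choosing the `m × n` matrix `φ` over `ℤ/p²` uniformly at random,
the conditional probability — i.e. the counting ratio — that the Bockstein homomorphism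
of `φ` equals a fixed `β : ker ψ → coker ψ`, given that `φ` reduces to `ψ` mod `p`,
is `1 / p ^ (k(m−n+k))`, where `k = dim ker ψ`.  (Here `m − n + k` is the natural
number `m − (n − k) = dim coker ψ`.) -/
theorem bockstein_uniform (p : ℕ) [Fact p.Prime] (n m k : ℕ)
    (ψ : ((Fin n → ZMod (p ^ 2)) ⧸ pSub p (Fin n → ZMod (p ^ 2))) →ₗ[ZMod p]
      ((Fin m → ZMod (p ^ 2)) ⧸ pSub p (Fin m → ZMod (p ^ 2))))
    (hk : k = Module.finrank (ZMod p) ↥(LinearMap.ker ψ))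
    (β : ↥(LinearMap.ker ψ) →ₗ[ZMod p]
      (((Fin m → ZMod (p ^ 2)) ⧸ pSub p (Fin m → ZMod (p ^ 2))) ⧸ LinearMap.range ψ)) :
    (Nat.card {φ : (Fin n → ZMod (p ^ 2)) →ₗ[ZMod (p ^ 2)] (Fin m → ZMod (p ^ 2)) //
        inducedMap p φ = ψ ∧ IsBockstein p ψ φ β} : ℚ) /
      (Nat.card {φ : (Fin n → ZMod (p ^ 2)) →ₗ[ZMod (p ^ 2)] (Fin m → ZMod (p ^ 2)) //
        inducedMap p φ = ψ} : ℚ) =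
      1 / (p : ℚ) ^ (k * (m - (n - k))) := by
  rw [bockstein_uniform_general, finrank_quotient_range_eq_sub, finrank_quotient_pSub,
    finrank_quotient_pSub, Module.finrank_fin_fun, Module.finrank_fin_fun, hk]
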